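/- There exists a binary sequence x ∈ {0,1}^ℕ that is normal in base 2 and satisfies lim_{n→∞} L_n(x)/log₂ n = ∞. -/

import Mathlib

open Filter

open Classical in
/-- `L_n(x)`: the maximal length of a run of consecutive ones among the first `n`
digits (positions `1,…,n`) of the binary sequence `x`. -/
noncomputable def runL (x : ℕ → Bool) (n : ℕ) : ℕ :=
  Nat.findGreatest
    (fun j => ∃ i, i + j ≤ n ∧ ∀ k, 1 ≤ k → k ≤ j → x (i + k) = true) n

/-- `N(x, w, n)`: the number of occurrences of the block `w` in `x` starting at
a position `i` with `1 ≤ i ≤ n`. -/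
def occCount (x : ℕ → Bool) (w : List Bool) (n : ℕ) : ℕ :=
  ((Finset.Icc 1 n).filter
    (fun i => ∀ k ∈ Finset.range w.length, x (i + k) = w.getD k false)).card

/-- A binary sequence is normal in base 2 if every nonempty block `w` appears
with frequency `2^{-|w|}`. -/
def NormalBaseTwo (x : ℕ → Bool) : Prop :=
  ∀ w : List Bool, w ≠ [] →
    Tendsto (fun n : ℕ => (occCount x w n : ℝ) / (n : ℝ)) atTop
      (nhds (1 / 2 ^ w.length))


open MeasureTheory ProbabilityTheory

noncomputable def coinM : Measure Bool := (PMF.uniformOfFintype Bool).toMeasure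

instance coinM_prob : IsProbabilityMeasure coinM := by unfold coinM; infer_instance

lemma coinM_single (b : Bool) : coinM {b} = 2⁻¹ := by
  unfold coinM
  rw [PMF.toMeasure_apply_singleton _ _ (measurableSet_singleton b)]
  simp

noncomputable def seqM : Measure (ℕ → Bool) := Measure.infinitePi (fun _ => coinM)

instance seqM_prob : IsProbabilityMeasure seqM := by unfold seqM; infer_instance

/-- cylinder event: the block `w` occurs at position `i` -/
def cyl (w : List Bool) (i : ℕ) : Set (ℕ → Bool) :=
  {x | ∀ k ∈ Finset.range w.length, x (i + k) = w.getD k false}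

lemma seqM_pi (s : Finset ℕ) (t : ℕ → Bool) :
    seqM (Set.pi s (fun i => {t i})) = 2⁻¹ ^ s.card := by
  unfold seqM
  rw [Measure.infinitePi_pi _ (fun i _ => measurableSet_singleton _)]
  simp [coinM_single]

lemma cyl_eq (w : List Bool) (i : ℕ) :
    cyl w i = Set.pi (Finset.Ico i (i + w.length)) (fun l => {w.getD (l - i) false}) := by
  ext x
  simp only [cyl, Set.mem_ofPred_eq, Set.mem_pi, Finset.mem_coe, Finset.mem_range, Finset.mem_Ico,
    Set.mem_singleton_iff]
  constructor
  · intro h l hl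
    have := h (l - i) (by omega)
    rwa [show i + (l - i) = l by omega] at this
  · intro h k hk
    have := h (i + k) (by omega)
    rwa [show i + k - i = k by omega] at this

lemma cyl_meas (w : List Bool) (i : ℕ) : MeasurableSet (cyl w i) := by
  rw [cyl_eq]
  exact MeasurableSet.pi (Finset.countable_toSet _) (fun _ _ => measurableSet_singleton _)

lemma seqM_cyl (w : List Bool) (i : ℕ) : seqM (cyl w i) = 2⁻¹ ^ w.length := by
  rw [cyl_eq, seqM_pi]; simp

lemma cyl_inter (w : List Bool) (i j : ℕ) (h : i + w.length ≤ j) :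
    seqM (cyl w i ∩ cyl w j) = seqM (cyl w i) * seqM (cyl w j) := by
  have : cyl w i ∩ cyl w j = Set.pi ((Finset.Ico i (i + w.length) ∪ Finset.Ico j (j + w.length) : Finset ℕ))
      (fun l => {if l < j then w.getD (l - i) false else w.getD (l - j) false}) := by
    rw [cyl_eq, cyl_eq]
    ext x
    simp only [Set.mem_inter_iff, Set.mem_pi, Finset.mem_coe, Finset.mem_union, Finset.mem_Ico,
      Set.mem_singleton_iff]
    constructor
    · rintro ⟨h1, h2⟩ l hl
      split_ifs with hlj
      · exact h1 l (by omega)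
      · exact h2 l (by omega)
    · intro h3
      refine ⟨fun l hl => ?_, fun l hl => ?_⟩
      · have := h3 l (Or.inl hl)
        rwa [if_pos (by omega)] at this
      · have := h3 l (Or.inr hl)
        rwa [if_neg (by omega)] at this
  rw [this, seqM_pi, seqM_cyl, seqM_cyl, Finset.card_union_of_disjoint, ← pow_add]
  · simp
  · rw [Finset.disjoint_left]
    intro a; simp only [Finset.mem_Ico]; omega

noncomputable def ind (w : List Bool) (i : ℕ) : (ℕ → Bool) → ℝ :=
  (cyl w i).indicator (fun _ => (1 : ℝ))

lemma ind_indep (w : List Bool) (i j : ℕ) (h : i + w.length ≤ j) :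
    IndepFun (ind w i) (ind w j) seqM := by
  have h1 : IndepSet (cyl w i) (cyl w j) seqM :=
    (indepSet_iff_measure_inter_eq_mul (cyl_meas w i) (cyl_meas w j) seqM).2 (cyl_inter w i j h)
  rw [IndepFun_iff_Indep]
  have h2 : Indep (MeasurableSpace.generateFrom {cyl w i})
    (MeasurableSpace.generateFrom {cyl w j}) seqM := h1
  exact indep_of_indep_of_le_left (indep_of_indep_of_le_right h2
    (MeasurableSpace.comap_indicator_const_le_generateFrom_singleton _ _))
    (MeasurableSpace.comap_indicator_const_le_generateFrom_singleton _ _)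

lemma ind_meas (w : List Bool) (i : ℕ) : Measurable (ind w i) :=
  measurable_const.indicator (cyl_meas w i)

lemma ind_ident (w : List Bool) (i j : ℕ) : IdentDistrib (ind w i) (ind w j) seqM seqM := by
  refine ⟨(ind_meas w i).aemeasurable, (ind_meas w j).aemeasurable, ?_⟩
  ext s hs
  rw [Measure.map_apply (ind_meas w i) hs, Measure.map_apply (ind_meas w j) hs]
  classical
  have key : ∀ i, seqM (ind w i ⁻¹' s) =
      ((if (1:ℝ) ∈ s then (if (0:ℝ) ∈ s then 1 else 2⁻¹ ^ w.length)
        else if (0:ℝ) ∈ s then 1 - 2⁻¹ ^ w.length else 0) : ENNReal) := by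
    intro i
    unfold ind
    rw [← seqM_cyl w i, ← prob_compl_eq_one_sub (cyl_meas w i)]
    rw [← measure_univ (μ := seqM), ← measure_empty (μ := seqM)]
    rw [Set.indicator_const_preimage_eq_union]
    split_ifs <;> simp
  rw [key, key]

lemma ind_integral (w : List Bool) (i : ℕ) : ∫ x, ind w i x ∂seqM = 1 / 2 ^ w.length := by
  unfold ind
  rw [integral_indicator_const _ (cyl_meas w i)]
  simp [Measure.real, seqM_cyl]

lemma slln (w : List Bool) (hw : w ≠ []) (r : ℕ) : ∀ᵐ x ∂seqM,
    Tendsto (fun n : ℕ => (∑ j ∈ Finset.range n, ind w (r + w.length * j) x) / n) atTop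
      (nhds (1 / 2 ^ w.length)) := by
  have hpos : 0 < w.length := List.length_pos_iff.2 hw
  have := strong_law_ae_real (μ := seqM) (fun j => ind w (r + w.length * j))
    ((integrable_const (1:ℝ)).indicator (cyl_meas w _)) ?_ (fun i => ind_ident w _ _)
  · simpa only [ind_integral] using this
  · intro i j hij
    have aux : ∀ i j, i < j → r + w.length * i + w.length ≤ r + w.length * j := by
      intro i j h
      have := Nat.mul_le_mul_left w.length (Nat.succ_le_of_lt h)
      rw [Nat.mul_succ] at this; omega
    rcases lt_or_gt_of_ne hij with h | h
    · exact ind_indep w _ _ (aux _ _ h)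
    · exact (ind_indep w _ _ (aux _ _ h)).symm

lemma exists_good : ∃ x : ℕ → Bool, ∀ w : List Bool, w ≠ [] → ∀ r : ℕ,
    Tendsto (fun n : ℕ => (∑ j ∈ Finset.range n, ind w (r + w.length * j) x) / n) atTop
      (nhds (1 / 2 ^ w.length)) := by
  have : ∀ᵐ x ∂seqM, ∀ w : List Bool, w ≠ [] → ∀ r : ℕ,
    Tendsto (fun n : ℕ => (∑ j ∈ Finset.range n, ind w (r + w.length * j) x) / n) atTop
      (nhds (1 / 2 ^ w.length)) := by
    rw [ae_all_iff]; intro w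
    by_cases hw : w = []
    · simp [hw]
    · have := (ae_all_iff (μ := seqM)).2 (fun r => slln w hw r)
      filter_upwards [this] with x hx _ r using hx r
  exact this.exists

lemma combine (f : ℕ → ℝ) (m : ℕ) (hm : 0 < m) (p : ℝ) (hf0 : ∀ i, 0 ≤ f i) (hf1 : ∀ i, f i ≤ 1)
    (h : ∀ r < m, Tendsto (fun n : ℕ => (∑ j ∈ Finset.range n, f (r + m * j)) / (n:ℝ)) atTop (nhds p)) :
    Tendsto (fun n : ℕ => (∑ i ∈ Finset.range n, f i) / (n:ℝ)) atTop (nhds p) := by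
  have hsum : ∀ k, ∑ i ∈ Finset.range (m * k), f i
      = ∑ r ∈ Finset.range m, ∑ j ∈ Finset.range k, f (r + m * j) := by
    intro k
    rw [Finset.sum_comm]
    induction k with
    | zero => simp
    | succ k ih =>
      rw [Nat.mul_succ, Finset.sum_range_add, ih, Finset.sum_range_succ]
      congr 1
      exact Finset.sum_congr rfl (fun r _ => by rw [add_comm])
  have h1 : Tendsto (fun k : ℕ => (∑ i ∈ Finset.range (m * k), f i) / (k:ℝ)) atTop (nhds (m * p)) := by
    simp_rw [hsum, Finset.sum_div]
    have := tendsto_finsetSum (Finset.range m) (fun r hr => h r (Finset.mem_range.1 hr))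
    simpa [Finset.sum_div] using this
  have hdiv : Tendsto (fun n : ℕ => n / m) atTop atTop := Nat.tendsto_div_const_atTop hm.ne'
  have h2 := h1.comp hdiv
  have h3 : Tendsto (fun n : ℕ => ((n / m : ℕ) : ℝ) / (n:ℝ)) atTop (nhds (1 / m)) := by
    have := (tendsto_nat_floor_mul_div_atTop (R := ℝ) (a := 1 / m) (by positivity)).comp
      tendsto_natCast_atTop_atTop
    refine this.congr (fun n => ?_)
    simp only [Function.comp]
    rw [one_div_mul_eq_div, Nat.floor_div_natCast, Nat.floor_natCast]
  have h4 := h2.mul h3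
  have hmR : (m:ℝ) ≠ 0 := by positivity
  rw [show (m:ℝ) * p * (1 / m) = p by field_simp] at h4
  have h5 : Tendsto (fun n : ℕ => (m:ℝ) / n) atTop (nhds 0) := tendsto_const_div_atTop_nhds_zero_nat _
  have h6 := h4.add h5
  rw [add_zero] at h6
  refine tendsto_of_tendsto_of_tendsto_of_le_of_le' h4 h6 ?_ ?_
  all_goals
    filter_upwards [eventually_ge_atTop m] with n hn
    have hk : 0 < n / m := Nat.div_pos hn hm
    have hkR : ((n / m : ℕ) : ℝ) ≠ 0 := by positivity
    have hn0 : (0:ℝ) < n := by exact_mod_cast lt_of_lt_of_le hm hn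
    have e : n = m * (n / m) + n % m := (Nat.div_add_mod n m).symm
    have e2 : ∑ i ∈ Finset.range n, f i = ∑ i ∈ Finset.range (m * (n / m)), f i
        + ∑ i ∈ Finset.range (n % m), f (m * (n / m) + i) := by
      conv_lhs => rw [e]
      rw [Finset.sum_range_add]
    simp only [Function.comp]
    rw [div_mul_div_cancel₀ hkR, e2]
  · gcongr
    have : 0 ≤ ∑ i ∈ Finset.range (n % m), f (m * (n / m) + i) := Finset.sum_nonneg (fun _ _ => hf0 _)
    linarith
  · rw [← add_div]
    gcongr
    calc _ ≤ ∑ i ∈ Finset.range (n % m), (1:ℝ) := Finset.sum_le_sum (fun _ _ => hf1 _)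
      _ = ((n % m : ℕ) : ℝ) := by simp
      _ ≤ m := by exact_mod_cast (Nat.mod_lt n hm).le

lemma occ_eq (x : ℕ → Bool) (w : List Bool) (n : ℕ) :
    (occCount x w n : ℝ) = ∑ i ∈ Finset.range n, ind w (1 + i) x := by
  classical
  unfold occCount
  rw [Finset.card_filter, ← Finset.Ico_add_one_right_eq_Icc, Finset.sum_Ico_eq_sum_range]
  push_cast
  refine Finset.sum_congr rfl (fun i _ => ?_)
  simp only [ind, Set.indicator, cyl, Set.mem_ofPred_eq]
  congr 1

lemma exists_normal : ∃ x : ℕ → Bool, NormalBaseTwo x := by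
  obtain ⟨x, hx⟩ := exists_good
  refine ⟨x, fun w hw => ?_⟩
  simp_rw [occ_eq]
  refine combine (fun i => ind w (1 + i) x) w.length (List.length_pos_iff.2 hw) _ ?_ ?_ ?_
  · intro i
    exact Set.indicator_nonneg (fun _ _ => zero_le_one) _
  · intro i
    simp only [ind, Set.indicator]; split_ifs <;> simp
  · intro r _
    simpa only [add_assoc] using hx w hw (1 + r)

def badSet : Set ℕ := {i | ∃ k : ℕ, 4 ^ k < i ∧ i ≤ 4 ^ k + 2 ^ k}

open Classical in
noncomputable def modSeq (y : ℕ → Bool) (i : ℕ) : Bool := if i ∈ badSet then true else y i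

open Classical in
lemma bad_card (N : ℕ) : (((Finset.Icc 1 N).filter (· ∈ badSet)).card : ℝ) ≤ 2 * Real.sqrt N := by
  rcases Nat.eq_zero_or_pos N with rfl | hN
  · simp
  have hsub : (Finset.Icc 1 N).filter (· ∈ badSet) ⊆
      (Finset.range (Nat.log 4 N + 1)).biUnion (fun k => Finset.Ioc (4 ^ k) (4 ^ k + 2 ^ k)) := by
    intro i hi
    rw [Finset.mem_filter, Finset.mem_Icc] at hi
    obtain ⟨⟨_, hiN⟩, k, hk1, hk2⟩ := hi
    simp only [Finset.mem_biUnion, Finset.mem_range, Finset.mem_Ioc]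
    refine ⟨k, Nat.lt_succ_of_le (Nat.le_log_of_pow_le (by norm_num) (by omega)), hk1, hk2⟩
  have h1 : ((Finset.Icc 1 N).filter (· ∈ badSet)).card ≤ 2 * 2 ^ Nat.log 4 N := by
    refine (Finset.card_le_card hsub).trans (Finset.card_biUnion_le.trans ?_)
    simp only [Nat.card_Ioc, Nat.add_sub_cancel_left]
    have := Nat.geomSum_eq (le_refl 2) (Nat.log 4 N + 1)
    rw [this, pow_succ]
    simp; omega
  have h2 : (2:ℝ) ^ Nat.log 4 N ≤ Real.sqrt N := by
    apply Real.le_sqrt_of_sq_le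
    rw [← pow_mul, mul_comm, pow_mul]
    norm_num
    exact_mod_cast Nat.pow_log_le_self 4 hN.ne'
  have h3 : (((Finset.Icc 1 N).filter (· ∈ badSet)).card : ℝ) ≤ 2 * 2 ^ Nat.log 4 N := by
    exact_mod_cast h1
  linarith

open Classical in
lemma occ_diff (x y : ℕ → Bool) (hxy : ∀ i, i ∉ badSet → x i = y i) (w : List Bool) (n : ℕ) :
    occCount x w n ≤ occCount y w n
      + w.length * ((Finset.Icc 1 (n + w.length)).filter (· ∈ badSet)).card := by
  have hsub : ((Finset.Icc 1 n).filter
      (fun i => ∀ k ∈ Finset.range w.length, x (i + k) = w.getD k false)) ⊆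
      ((Finset.Icc 1 n).filter
      (fun i => ∀ k ∈ Finset.range w.length, y (i + k) = w.getD k false)) ∪
      (Finset.range w.length).biUnion (fun k => (Finset.Icc 1 n).filter (fun i => i + k ∈ badSet)) := by
    intro i hi
    simp only [Finset.mem_union, Finset.mem_filter, Finset.mem_biUnion] at hi ⊢
    by_cases hb : ∃ k ∈ Finset.range w.length, i + k ∈ badSet
    · obtain ⟨k, hk, hb⟩ := hb
      exact Or.inr ⟨k, hk, hi.1, hb⟩
    · left
      refine ⟨hi.1, fun k hk => ?_⟩
      rw [← hxy _ (fun h => hb ⟨k, hk, h⟩)]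
      exact hi.2 k hk
  unfold occCount
  refine (Finset.card_le_card hsub).trans ((Finset.card_union_le _ _).trans ?_)
  refine Nat.add_le_add_left (Finset.card_biUnion_le.trans ?_) _
  have : ∀ k ∈ Finset.range w.length, ((Finset.Icc 1 n).filter (fun i => i + k ∈ badSet)).card ≤
      ((Finset.Icc 1 (n + w.length)).filter (· ∈ badSet)).card := by
    intro k hk
    refine Finset.card_le_card_of_injOn (fun i => i + k) ?_ (fun a _ b _ h => Nat.add_right_cancel h)
    intro i hi
    simp only [Finset.mem_range, Finset.coe_filter, Finset.mem_Icc, Set.mem_ofPred_eq] at *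
    exact ⟨by omega, hi.2⟩
  refine (Finset.sum_le_sum this).trans ?_
  simp

lemma mod_normal (y : ℕ → Bool) (hy : NormalBaseTwo y) : NormalBaseTwo (modSeq y) := by
  classical
  intro w hw
  have hxy : ∀ i, i ∉ badSet → modSeq y i = y i := fun i hi => by simp [modSeq, hi]
  have hd1 := occ_diff (modSeq y) y hxy w
  have hd2 := occ_diff y (modSeq y) (fun i hi => (hxy i hi).symm) w
  have hb := fun n => bad_card (n + w.length)
  set m := w.length with hm
  have herr : Tendsto (fun n : ℕ => ((m:ℝ) * (2 * Real.sqrt ((n + m : ℕ) : ℝ))) / n) atTop (nhds 0) := by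
    have e1 : Tendsto (fun n : ℕ => (Real.sqrt (n:ℝ))⁻¹) atTop (nhds 0) :=
      tendsto_inv_atTop_zero.comp (Real.tendsto_sqrt_atTop.comp tendsto_natCast_atTop_atTop)
    have e2 := e1.const_mul ((m:ℝ) * 2 * 2)
    rw [mul_zero] at e2
    refine squeeze_zero' (Eventually.of_forall fun n => by positivity) ?_ e2
    filter_upwards [eventually_ge_atTop (m + 1)] with n hn
    have hn0 : (0:ℝ) < n := by exact_mod_cast (by omega : 0 < n)
    have hs : Real.sqrt ((n + m : ℕ) : ℝ) ≤ 2 * Real.sqrt n := by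
      rw [show (2:ℝ) * Real.sqrt n = Real.sqrt (4 * n) by
        rw [Real.sqrt_mul (by norm_num), show (4:ℝ) = 2 ^ 2 by norm_num, Real.sqrt_sq (by norm_num)]]
      apply Real.sqrt_le_sqrt
      exact_mod_cast (by omega : n + m ≤ 4 * n)
    rw [div_le_iff₀ hn0]
    have hsq : (Real.sqrt n)⁻¹ * n = Real.sqrt n := by
      rw [inv_mul_eq_div, Real.div_sqrt]
    rw [mul_assoc _ _ (n:ℝ), hsq]
    have : (0:ℝ) ≤ m := by positivity
    nlinarith [mul_le_mul_of_nonneg_left hs this]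
  have hyw := hy w hw
  have hlo := hyw.sub herr
  have hhi := hyw.add herr
  rw [sub_zero] at hlo
  rw [add_zero] at hhi
  refine tendsto_of_tendsto_of_tendsto_of_le_of_le hlo hhi ?_ ?_
  · intro n
    dsimp only
    rw [← sub_div]
    gcongr
    have h1 : (occCount y w n : ℝ) ≤ occCount (modSeq y) w n
      + m * ((Finset.Icc 1 (n + m)).filter (· ∈ badSet)).card := by exact_mod_cast hd2 n
    have := mul_le_mul_of_nonneg_left (hb n) (Nat.cast_nonneg (α := ℝ) m)
    linarith
  · intro n
    dsimp only
    rw [← add_div]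
    gcongr
    have h1 : (occCount (modSeq y) w n : ℝ) ≤ occCount y w n
      + m * ((Finset.Icc 1 (n + m)).filter (· ∈ badSet)).card := by exact_mod_cast hd1 n
    have := mul_le_mul_of_nonneg_left (hb n) (Nat.cast_nonneg (α := ℝ) m)
    linarith

lemma mod_run (y : ℕ → Bool) (n : ℕ) (hn : 4 ≤ n) : Real.sqrt n / 4 ≤ runL (modSeq y) n := by
  classical
  obtain ⟨k, hk⟩ : ∃ k, Nat.log 4 n = k + 1 := by
    have : 1 ≤ Nat.log 4 n := Nat.le_log_of_pow_le (by norm_num) (by simpa using hn)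
    exact ⟨Nat.log 4 n - 1, by omega⟩
  have h1 : 4 ^ (k + 1) ≤ n := hk ▸ Nat.pow_log_le_self 4 (by omega)
  have h2 : n < 4 ^ (k + 2) := by
    have := Nat.lt_pow_succ_log_self (b := 4) (by norm_num) n
    rwa [hk] at this
  have h3 : 2 ^ k ≤ 4 ^ k := Nat.pow_le_pow_left (by norm_num) k
  have h4 : 4 ^ k + 2 ^ k ≤ n := by rw [pow_succ] at h1; omega
  have h5 : 2 ^ k ≤ runL (modSeq y) n := by
    unfold runL
    apply Nat.le_findGreatest (by omega)
    refine ⟨4 ^ k, h4, fun l hl1 hl2 => ?_⟩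
    have : 4 ^ k + l ∈ badSet := ⟨k, by omega, by omega⟩
    simp [modSeq, this]
  have h6 : (2:ℝ) ^ k ≤ runL (modSeq y) n := by exact_mod_cast h5
  have h7 : Real.sqrt n ≤ 4 * 2 ^ k := by
    apply Real.sqrt_le_iff.2 ⟨by positivity, ?_⟩
    have : (n:ℝ) ≤ 4 ^ (k + 2) := by exact_mod_cast h2.le
    refine this.trans (le_of_eq ?_)
    rw [mul_pow, ← pow_mul, mul_comm k 2, pow_mul, pow_add]; norm_num; ring
  linarith

/-- There is a binary sequence that is normal in base 2 and satisfies
`L_n(x)/log₂ n → ∞`. -/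
theorem normal_runratio_tendsto_atTop :
    ∃ x : ℕ → Bool, NormalBaseTwo x ∧
      Tendsto (fun n : ℕ => (runL x n : ℝ) / Real.logb 2 (n : ℝ)) atTop atTop := by
  obtain ⟨y, hy⟩ := exists_normal
  refine ⟨modSeq y, mod_normal y hy, ?_⟩
  have h0 : Tendsto (fun t : ℝ => t ^ (1/4 : ℝ) * (Real.log 2 / 16)) atTop atTop :=
    (tendsto_rpow_atTop (by norm_num)).atTop_mul_const
      (by have := Real.log_pos one_lt_two; positivity)
  refine tendsto_atTop_mono' atTop ?_ (h0.comp tendsto_natCast_atTop_atTop)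
  filter_upwards [eventually_ge_atTop 4] with n hn
  have hr := mod_run y n hn
  have hn4 : (4:ℝ) ≤ n := by exact_mod_cast hn
  have hlog : 0 < Real.log n := Real.log_pos (by linarith)
  have hl2 : 0 < Real.log 2 := Real.log_pos one_lt_two
  have hle : Real.log n ≤ (n:ℝ) ^ (1/4:ℝ) / (1/4) :=
    Real.log_le_rpow_div (by linarith) (by norm_num)
  have hsq : Real.sqrt n = (n:ℝ) ^ (1/4:ℝ) * (n:ℝ) ^ (1/4:ℝ) := by
    rw [← Real.rpow_add (by linarith), Real.sqrt_eq_rpow]; norm_num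
  have hp : 0 < (n:ℝ) ^ (1/4:ℝ) := Real.rpow_pos_of_pos (by linarith) _
  simp only [Function.comp, Real.logb]
  rw [le_div_iff₀ (by positivity)]
  refine le_trans ?_ hr
  rw [hsq]
  have : (n:ℝ) ^ (1/4:ℝ) * (Real.log 2 / 16) * (Real.log n / Real.log 2)
      = (n:ℝ) ^ (1/4:ℝ) * Real.log n / 16 := by field_simp
  rw [this]
  nlinarith [mul_le_mul_of_nonneg_left hle hp.le]
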